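/- arXiv:2006.02283 — 2 statements merged into one kernel-verified Lean document; each statement's English description precedes it below -/
import Mathlib

section
/- Let U and V be real Hilbert spaces, B : U × V → ℝ a bounded bilinear form, F : V → ℝ a bounded linear functional, and let U^h ⊆ U and V^h ⊆ V be closed subspaces. Define the discrete trial-to-test operator T^h : U → V^h by (T^h u, v)_V = B(u, v) for all v ∈ V^h. Then a pair (u^h, Ê^h) ∈ U^h × V^h satisfies the mixed (saddle-point) system (Ê^h, v)_V − B(u^h, v) = −F(v) for all v ∈ V^h and B(p, Ê^h is replaced by its role as test argument, i.e. the constraint) B(p, ·) evaluated at Ê^h: B(p, Ê^h) = 0 for all p ∈ U^h, if and only if u^h solves the Petrov–Galerkin problem with optimal test space: B(u^h, T^h p) = F(T^h p) for all p ∈ U^h, and Ê^h ∈ V^h is the unique element of V^h with (Ê^h, v)_V = B(u^h, v) − F(v) for all v ∈ V^h. (This is the equivalence between the AVS-FE discretization with on-the-fly optimal test functions and its mixed saddle-point reformulation.) -/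
open scoped RealInnerProductSpace

/-! Both `T^h p` and the error representation `Ê^h` are Riesz representers in `V^h`, of `B(p, ·)`
and of the residual `B(u^h, ·) - F`. Hence `B(p, Ê^h)` and `B(u^h, T^h p) - F(T^h p)` are the same
inner product of `T^h p` with `Ê^h`, up to the order of the two arguments, and one vanishes exactly
when the other does. -/

section

open scoped InnerProductSpace

variable {𝕜 U V : Type*} [RCLike 𝕜]

/-- `t` is the Riesz representer in the subspace `K` of the functional `φ`, as `T^h p` is for
`B(p, ·)`. Here `φ` is a plain function, which only has to be linear and bounded on `K`; having a
representer forces this. -/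
def IsRieszRepresenter [SeminormedAddCommGroup V] [InnerProductSpace 𝕜 V]
    (K : Submodule 𝕜 V) (φ : V → 𝕜) (t : V) : Prop :=
  t ∈ K ∧ ∀ v ∈ K, ⟪t, v⟫_𝕜 = φ v

namespace IsRieszRepresenter

theorem unique [NormedAddCommGroup V] [InnerProductSpace 𝕜 V] {K : Submodule 𝕜 V}
    {φ : V → 𝕜} {s t : V} (hs : IsRieszRepresenter K φ s) (ht : IsRieszRepresenter K φ t) :
    s = t := by
  have eq_in_K : (⟨s, hs.1⟩ : K) = ⟨t, ht.1⟩ :=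
    ext_inner_right 𝕜 fun v => (hs.2 v v.2).trans (ht.2 v v.2).symm
  exact congrArg Subtype.val eq_in_K

variable [SeminormedAddCommGroup V] [InnerProductSpace 𝕜 V] {K : Submodule 𝕜 V}

theorem apply_eq_zero_comm {φ ψ : V → 𝕜} {s t : V}
    (hs : IsRieszRepresenter K φ s) (ht : IsRieszRepresenter K ψ t) :
    φ t = 0 ↔ ψ s = 0 := by
  rw [← hs.2 t ht.1, ← ht.2 s hs.1, inner_eq_zero_symm]

theorem forall_apply_eq_zero_iff_petrovGalerkin {B : U → V → 𝕜} {F : V → 𝕜} {S : Set U}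
    {T : U → V} {u : U} {e : V} (he : IsRieszRepresenter K (B u - F) e)
    (hT : ∀ p ∈ S, IsRieszRepresenter K (B p) (T p)) :
    (∀ p ∈ S, B p e = 0) ↔ ∀ p ∈ S, B u (T p) = F (T p) :=
  forall₂_congr fun p hp => by
    rw [(hT p hp).apply_eq_zero_comm he, Pi.sub_apply, sub_eq_zero]

end IsRieszRepresenter

theorem mixed_saddle_point_equivalence_general
    [NormedAddCommGroup V] [InnerProductSpace 𝕜 V]
    (B : U → V → 𝕜) (F : V → 𝕜) (S : Set U) (K : Submodule 𝕜 V) (T : U → V)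
    (hT : ∀ p ∈ S, IsRieszRepresenter K (B p) (T p)) (u : U) (e : V) (he : e ∈ K) :
    ((∀ v ∈ K, ⟪e, v⟫_𝕜 - B u v = -F v) ∧ (∀ p ∈ S, B p e = 0))
      ↔
    ((∀ p ∈ S, B u (T p) = F (T p)) ∧
      (∀ v ∈ K, ⟪e, v⟫_𝕜 = B u v - F v) ∧
      (∀ e' : V, e' ∈ K → (∀ v ∈ K, ⟪e', v⟫_𝕜 = B u v - F v) → e' = e)) := by
  have residual_iff : (∀ v ∈ K, ⟪e, v⟫_𝕜 - B u v = -F v) ↔ ∀ v ∈ K, ⟪e, v⟫_𝕜 = B u v - F v :=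
    forall₂_congr fun v _ => by rw [sub_eq_iff_eq_add, neg_add_eq_sub]
  rw [residual_iff]
  constructor
  · rintro ⟨residual, constraint⟩
    have representer : IsRieszRepresenter K (B u - F) e := ⟨he, residual⟩
    exact ⟨(representer.forall_apply_eq_zero_iff_petrovGalerkin hT).mp constraint, residual,
      fun e' he' residual' => IsRieszRepresenter.unique ⟨he', residual'⟩ representer⟩
  · rintro ⟨petrovGalerkin, residual, -⟩
    have representer : IsRieszRepresenter K (B u - F) e := ⟨he, residual⟩
    exact ⟨residual, (representer.forall_apply_eq_zero_iff_petrovGalerkin hT).mpr petrovGalerkin⟩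

end

/-- Equivalence between the mixed (saddle-point) formulation of the AVS-FE method and the
Petrov–Galerkin problem with optimal test functions computed via the discrete
trial-to-test operator `T^h`. -/
theorem mixed_saddle_point_equivalence
    {U V : Type*}
    [NormedAddCommGroup U] [InnerProductSpace ℝ U] [CompleteSpace U]
    [NormedAddCommGroup V] [InnerProductSpace ℝ V] [CompleteSpace V]
    (B : U →ₗ[ℝ] V →ₗ[ℝ] ℝ) (M : ℝ)
    (hbound : ∀ (u : U) (v : V), |B u v| ≤ M * ‖u‖ * ‖v‖)
    (F : V →L[ℝ] ℝ)
    (Uh : Submodule ℝ U) (Vh : Submodule ℝ V)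
    (hUh : IsClosed (Uh : Set U)) (hVh : IsClosed (Vh : Set V))
    (Th : U → V) (hThmem : ∀ u : U, Th u ∈ Vh)
    (hTh : ∀ (u : U), ∀ v ∈ Vh, ⟪Th u, v⟫ = B u v)
    (uh : U) (huh : uh ∈ Uh) (Eh : V) (hEhmem : Eh ∈ Vh) :
    ((∀ v ∈ Vh, ⟪Eh, v⟫ - B uh v = -(F v)) ∧ (∀ p ∈ Uh, B p Eh = 0))
      ↔
    ((∀ p ∈ Uh, B uh (Th p) = F (Th p)) ∧
      (∀ v ∈ Vh, ⟪Eh, v⟫ = B uh v - F v) ∧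
      (∀ E' : V, E' ∈ Vh → (∀ v ∈ Vh, ⟪E', v⟫ = B uh v - F v) → E' = Eh)) :=
  mixed_saddle_point_equivalence_general (fun p => B p) F Uh Vh Th
    (fun p _ => ⟨hThmem p, hTh p⟩) uh Eh hEhmem
end

section
/- Let U and V be real Hilbert spaces and B : U × V → ℝ a bounded bilinear form satisfying the inf-sup condition with constant γ > 0, and let T : U → V be the trial-to-test operator defined by (Tu, v)_V = B(u, v) for all v ∈ V. Let F : V → ℝ be a bounded linear functional and suppose u ∈ U satisfies B(u, v) = F(v) for all v ∈ V. Let U^h ⊆ U be a finite-dimensional subspace. Then there exists a unique u^h ∈ U^h satisfying B(u^h, Tw) = F(Tw) for all w ∈ U^h, and this discrete solution is the best approximation of u from U^h in the energy norm: ‖u − u^h‖_B = min over w ∈ U^h of ‖u − w‖_B. Consequently ‖u − u^h‖_U ≤ (M/γ) inf over w ∈ U^h of ‖u − w‖_U, where M is the continuity constant of B. -/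
open scoped RealInnerProductSpace

/-!
Since `B w v = ⟪T w, v⟫`, the energy norm of `w` is `‖T w‖`, and the discrete equations are the
normal equations `⟪T (u - uh), T w⟫ = 0` for `w ∈ Uh`. Hence `T uh` is the orthogonal projection of
`T u` onto `T(Uh)`, complete like `Uh` since `T` is bounded above and below. The `U`-norm estimate
compares `‖T x‖` with `‖x‖` on both sides.
-/

section

open scoped InnerProductSpace

variable {𝕜 : Type*} [RCLike 𝕜]

theorem iSup_norm_inner_div_norm {E : Type*} [NormedAddCommGroup E] [InnerProductSpace 𝕜 E]
    (x : E) : ⨆ y : {y : E // y ≠ 0}, ‖⟪x, y.1⟫_𝕜‖ / ‖y.1‖ = ‖x‖ := by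
  have hle : ∀ y : {y : E // y ≠ 0}, ‖⟪x, y.1⟫_𝕜‖ / ‖y.1‖ ≤ ‖x‖ := fun y =>
    (div_le_iff₀ (norm_pos_iff.2 y.2)).2 (norm_inner_le_norm x y.1)
  refine le_antisymm (Real.iSup_le hle (norm_nonneg x)) ?_
  rcases eq_or_ne x 0 with rfl | hx
  · simp
  · calc ‖x‖ = ‖⟪x, x⟫_𝕜‖ / ‖x‖ := by
          rw [← inner_self_re_eq_norm, inner_self_eq_norm_mul_norm,
            mul_div_cancel_right₀ _ (norm_ne_zero_iff.2 hx)]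
      _ ≤ _ := le_ciSup (f := fun y : {y : E // y ≠ 0} => ‖⟪x, y.1⟫_𝕜‖ / ‖y.1‖)
          ⟨‖x‖, Set.forall_mem_range.2 hle⟩ ⟨x, hx⟩

section NormalEquations

variable {U V : Type*} [AddCommGroup U] [Module 𝕜 U] [NormedAddCommGroup V]
  [InnerProductSpace 𝕜 V] {T : U →ₗ[𝕜] V} {Uh : Submodule 𝕜 U}

theorem existsUnique_inner_map_eq (hT : Set.InjOn T Uh) [(Uh.map T).HasOrthogonalProjection]
    (y : V) : ∃! x, x ∈ Uh ∧ ∀ w ∈ Uh, ⟪T x, T w⟫_𝕜 = ⟪y, T w⟫_𝕜 := by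
  obtain ⟨x, hx, hproj⟩ := (Uh.map T).starProjection_apply_mem y
  refine ⟨x, ⟨hx, fun w hw => ?_⟩, fun x' ⟨hx', heq⟩ => hT hx' hx ?_⟩
  · have horth := (Uh.map T).starProjection_inner_eq_zero y (T w) (Submodule.mem_map_of_mem hw)
    rw [← hproj, inner_sub_left, sub_eq_zero] at horth
    exact horth.symm
  · rw [hproj]
    refine (Submodule.eq_starProjection_of_mem_of_inner_eq_zero
      (Submodule.mem_map_of_mem hx') ?_).symm
    rintro _ ⟨w, hw, rfl⟩
    rw [inner_sub_left, heq w hw, sub_self]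

theorem norm_map_sub_le_of_inner_map_eq {u x w : U} (hx : x ∈ Uh)
    (heq : ∀ w ∈ Uh, ⟪T x, T w⟫_𝕜 = ⟪T u, T w⟫_𝕜) (hw : w ∈ Uh) :
    ‖T (u - x)‖ ≤ ‖T (u - w)‖ := by
  have horth : ∀ z ∈ Uh.map T, ⟪T u - T x, z⟫_𝕜 = 0 := by
    rintro _ ⟨z, hz, rfl⟩
    rw [inner_sub_left, heq z hz, sub_self]
  have hmin := ((Uh.map T).norm_eq_iInf_iff_inner_eq_zero (Submodule.mem_map_of_mem hx)).2 horth
  rw [map_sub, map_sub, hmin]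
  exact ciInf_le (f := fun z : Uh.map T => ‖T u - z‖)
    ⟨0, Set.forall_mem_range.2 fun _ => norm_nonneg _⟩ ⟨T w, Submodule.mem_map_of_mem hw⟩

end NormalEquations

theorem completeSpace_map_of_antilipschitzWith {R E F : Type*} [Ring R]
    [SeminormedAddCommGroup E] [Module R E] [SeminormedAddCommGroup F] [Module R F]
    {T : E →ₗ[R] F} {K : NNReal} (hT : AntilipschitzWith K T) (hcont : UniformContinuous T)
    (p : Submodule R E) [CompleteSpace p] : CompleteSpace (p.map T) :=
  IsComplete.completeSpace_coe <|
    (isComplete_image_iff (hT.isUniformInducing hcont)).2 (completeSpace_coe_iff_isComplete.1 ‹_›)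

/-- The energy norm `‖w‖_B = sup_{v ≠ 0} |B(w, v)| / ‖v‖`. Over a general scalar field, `B` is
sesquilinear, conjugate-linear in its first argument as the inner product is. The real supremum
is `0` when the quotients are unbounded. -/
noncomputable def energyNorm {U V : Type*} [AddCommGroup U] [Module 𝕜 U] [NormedAddCommGroup V]
    [Module 𝕜 V] (B : U →ₗ⋆[𝕜] V →ₗ[𝕜] 𝕜) (w : U) : ℝ :=
  ⨆ v : {v : V // v ≠ 0}, ‖B w v.1‖ / ‖v.1‖

/-- `T` is the trial-to-test operator of `B`: it sends `u` to the Riesz representative of the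
functional `B u`. A predicate, so that its existence does not require `V` to be complete. -/
def IsTrialToTest {U V : Type*} [AddCommGroup U] [Module 𝕜 U] [NormedAddCommGroup V]
    [InnerProductSpace 𝕜 V] (B : U →ₗ⋆[𝕜] V →ₗ[𝕜] 𝕜) (T : U → V) : Prop :=
  ∀ (u : U) (v : V), ⟪T u, v⟫_𝕜 = B u v

/-- `uh` solves the Petrov–Galerkin problem with load `F`, trial space `Uh` and the
optimal test space `T(Uh)`. -/
def IsDiscreteSolution {U V : Type*} [AddCommGroup U] [Module 𝕜 U] [AddCommGroup V]
    [Module 𝕜 V] (B : U →ₗ⋆[𝕜] V →ₗ[𝕜] 𝕜) (T : U → V) (F : V → 𝕜) (Uh : Submodule 𝕜 U) (uh : U) :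
    Prop :=
  uh ∈ Uh ∧ ∀ w ∈ Uh, B uh (T w) = F (T w)

namespace IsTrialToTest

section Algebraic

variable {U V : Type*} [AddCommGroup U] [Module 𝕜 U] [NormedAddCommGroup V]
  [InnerProductSpace 𝕜 V] {B : U →ₗ⋆[𝕜] V →ₗ[𝕜] 𝕜} {T : U → V}

theorem exists_linearMap_coe_eq (hT : IsTrialToTest B T) : ∃ L : U →ₗ[𝕜] V, ⇑L = T := by
  refine ⟨⟨⟨T, fun x y => ext_inner_right 𝕜 fun v => ?_⟩,
    fun c x => ext_inner_right 𝕜 fun v => ?_⟩, rfl⟩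
  · rw [inner_add_left, hT, hT, hT, map_add, LinearMap.add_apply]
  · change ⟪T (c • x), v⟫_𝕜 = ⟪c • T x, v⟫_𝕜
    rw [inner_smul_left, hT, hT, map_smulₛₗ, LinearMap.smul_apply, smul_eq_mul]

theorem energyNorm_eq (hT : IsTrialToTest B T) (w : U) : energyNorm B w = ‖T w‖ := by
  simp only [energyNorm, ← hT w, iSup_norm_inner_div_norm]

theorem isDiscreteSolution_iff (hT : IsTrialToTest B T) {F : V → 𝕜} {u : U}
    (hu : ∀ v, B u v = F v) {Uh : Submodule 𝕜 U} {uh : U} :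
    IsDiscreteSolution B T F Uh uh ↔ uh ∈ Uh ∧ ∀ w ∈ Uh, ⟪T uh, T w⟫_𝕜 = ⟪T u, T w⟫_𝕜 := by
  simp only [IsDiscreteSolution, hT uh, hT u, hu]

end Algebraic

theorem norm_apply_le {U V : Type*} [SeminormedAddCommGroup U] [Module 𝕜 U]
    [NormedAddCommGroup V] [InnerProductSpace 𝕜 V] {B : U →ₗ⋆[𝕜] V →ₗ[𝕜] 𝕜} {T : U → V}
    (hT : IsTrialToTest B T) {M : ℝ} {u : U} (hbound : ∀ v, ‖B u v‖ ≤ M * ‖u‖ * ‖v‖)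
    (hu : T u ≠ 0) : ‖T u‖ ≤ M * ‖u‖ := by
  refine le_of_mul_le_mul_right ?_ (norm_pos_iff.2 hu)
  calc ‖T u‖ * ‖T u‖ = ‖B u (T u)‖ := by
        rw [← hT, ← inner_self_re_eq_norm, inner_self_eq_norm_mul_norm]
    _ ≤ M * ‖u‖ * ‖T u‖ := hbound (T u)

end IsTrialToTest

theorem discrete_solution_best_approximation_general {U V : Type*}
    [NormedAddCommGroup U] [Module 𝕜 U] [NormedAddCommGroup V] [InnerProductSpace 𝕜 V]
    (B : U →ₗ⋆[𝕜] V →ₗ[𝕜] 𝕜) {M γ : ℝ} (hbound : ∀ u v, ‖B u v‖ ≤ M * ‖u‖ * ‖v‖)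
    (hγ : 0 < γ) (hinfsup : ∀ u, γ * ‖u‖ ≤ energyNorm B u)
    {T : U → V} (hT : IsTrialToTest B T) {F : V → 𝕜} {u : U} (hu : ∀ v, B u v = F v)
    (Uh : Submodule 𝕜 U) [CompleteSpace Uh] :
    (∃! uh, IsDiscreteSolution B T F Uh uh) ∧
      ∀ uh, IsDiscreteSolution B T F Uh uh →
        (∀ w ∈ Uh, energyNorm B (u - uh) ≤ energyNorm B (u - w)) ∧
          ∀ w ∈ Uh, ‖u - uh‖ ≤ M / γ * ‖u - w‖ := by
  obtain ⟨T, rfl⟩ := hT.exists_linearMap_coe_eq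
  simp only [hT.isDiscreteSolution_iff hu, hT.energyNorm_eq] at hinfsup ⊢
  obtain ⟨K, hK⟩ := antilipschitzWith_iff_exists_mul_le_norm.2 ⟨γ, hγ, hinfsup⟩
  have hle (x : U) : ‖T x‖ ≤ M * ‖x‖ := by
    rcases eq_or_ne x 0 with rfl | hx
    · simp
    · exact hT.norm_apply_le (hbound x) ((map_ne_zero_iff T hK.injective).2 hx)
  have hcont : UniformContinuous T := AddMonoidHomClass.uniformContinuous_of_bound T M hle
  have : CompleteSpace (Uh.map T) := completeSpace_map_of_antilipschitzWith hK hcont Uh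
  refine ⟨existsUnique_inner_map_eq hK.injective.injOn (T u), fun uh ⟨huh, heq⟩ => ?_⟩
  have hbest : ∀ w ∈ Uh, ‖T (u - uh)‖ ≤ ‖T (u - w)‖ := fun w hw =>
    norm_map_sub_le_of_inner_map_eq huh heq hw
  refine ⟨hbest, fun w hw => ?_⟩
  rw [div_mul_eq_mul_div, le_div_iff₀' hγ]
  calc γ * ‖u - uh‖ ≤ ‖T (u - uh)‖ := hinfsup _
    _ ≤ ‖T (u - w)‖ := hbest w hw
    _ ≤ M * ‖u - w‖ := hle _

end

/-- The discrete Petrov–Galerkin problem with optimal test functions has a unique solution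
in a finite-dimensional trial subspace, this solution is the best approximation of the
exact solution in the energy norm, and quasi-optimality holds in the `U`-norm with
constant `M/γ`. -/
theorem discrete_solution_best_approximation
    {U V : Type*}
    [NormedAddCommGroup U] [InnerProductSpace ℝ U] [CompleteSpace U]
    [NormedAddCommGroup V] [InnerProductSpace ℝ V] [CompleteSpace V]
    (B : U →ₗ[ℝ] V →ₗ[ℝ] ℝ) (M : ℝ) (hM : 0 < M)
    (hbound : ∀ (u : U) (v : V), |B u v| ≤ M * ‖u‖ * ‖v‖)
    (γ : ℝ) (hγ : 0 < γ)
    (hinfsup : ∀ u : U, γ * ‖u‖ ≤ ⨆ v : {v : V // v ≠ 0}, |B u v.1| / ‖v.1‖)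
    (T : U → V) (hT : ∀ (u : U) (v : V), ⟪T u, v⟫ = B u v)
    (F : V →L[ℝ] ℝ) (u : U) (hu : ∀ v : V, B u v = F v)
    (Uh : Submodule ℝ U) [FiniteDimensional ℝ Uh] :
    (∃! uh : U, uh ∈ Uh ∧ ∀ w ∈ Uh, B uh (T w) = F (T w)) ∧
      (∀ uh : U, uh ∈ Uh → (∀ w ∈ Uh, B uh (T w) = F (T w)) →
        ((∀ w ∈ Uh,
            (⨆ v : {v : V // v ≠ 0}, |B (u - uh) v.1| / ‖v.1‖) ≤
              ⨆ v : {v : V // v ≠ 0}, |B (u - w) v.1| / ‖v.1‖) ∧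
          (∀ w ∈ Uh, ‖u - uh‖ ≤ (M / γ) * ‖u - w‖))) := by
  have : CompleteSpace Uh := FiniteDimensional.complete ℝ Uh
  have hgen := discrete_solution_best_approximation_general B hbound hγ hinfsup hT hu Uh
  exact ⟨hgen.1, fun uh huh heq => hgen.2 uh ⟨huh, heq⟩⟩
end
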